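/- Let k, m be positive integers and let e ≥ 0 be an integer with m + k ≤ 2^{e+1}. Then for every i with 1 ≤ i ≤ k, the element z_i = x_i ⊗ 1 + 1 ⊗ x_i of R(k,m) ⊗ R(k,m) satisfies z_i^{2^{e+1}} = 0. -/

import Mathlib

/-!
Raising to the power `2 ^ (e + 1)` is additive in characteristic two, so it suffices that
`x_j ^ (m + k) = 0` in `R(k,m)`.

The recurrence `h_{d+1}(l, x) = h_{d+1}(l) + x h_d(l, x)` also holds with `x` at the head of the
list, so symmetry of `h_d` is not needed. Appending variables, it shows that `h_d(x_1, …, x_n) = 0`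
for all `d ≥ m + k + 1 - n`, and not only for the generator, where equality holds. Discarding
`x_1, …, x_{n-1}` from the head, each at the cost of raising the bound on `d` by one, it leaves
`x_n ^ d = h_d(x_n) = 0` for all `d ≥ m + k`.
-/

open scoped TensorProduct

/-- Complete homogeneous symmetric polynomial of degree `d` in a list of elements
of a commutative (semi)ring: `h_d(l)`. -/
noncomputable def completeHomog {R : Type*} [CommSemiring R] : List R → ℕ → R
  | [], 0 => 1
  | [], _ + 1 => 0
  | x :: l, d => ∑ t ∈ Finset.range (d + 1), x ^ t * completeHomog l (d - t)

/-- Elementary symmetric polynomial of degree `d` in a list of elements: `e_d(l)`. -/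
noncomputable def elemSymm {R : Type*} [CommSemiring R] : List R → ℕ → R
  | _, 0 => 1
  | [], _ + 1 => 0
  | x :: l, d + 1 => elemSymm l (d + 1) + x * elemSymm l d

/-- The ideal of `(ZMod 2)[x_1, …, x_k]` generated by the complete homogeneous
symmetric polynomials `h_{m+i}(x_1, …, x_{k+1-i})` for `1 ≤ i ≤ k`. -/
noncomputable def flagIdeal (k m : ℕ) : Ideal (MvPolynomial (Fin k) (ZMod 2)) :=
  Ideal.span { p | ∃ i : ℕ, 1 ≤ i ∧ i ≤ k ∧
    p = completeHomog (((List.finRange k).take (k + 1 - i)).map MvPolynomial.X) (m + i) }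

/-- `R(k,m)`, the quotient of `(ZMod 2)[x_1, …, x_k]` by `flagIdeal k m`;
this is the mod-2 cohomology ring of the real flag manifold `F(1^k, m)`. -/
abbrev FlagRing (k m : ℕ) : Type :=
  MvPolynomial (Fin k) (ZMod 2) ⧸ flagIdeal k m

/-- The image of the variable `x_{j+1}` in `R(k,m)` (`j` is 0-indexed). -/
noncomputable def xGen (k m : ℕ) (j : Fin k) : FlagRing k m :=
  Ideal.Quotient.mk (flagIdeal k m) (MvPolynomial.X j)

/-- The zero-divisor `z_{j+1} = x_{j+1} ⊗ 1 + 1 ⊗ x_{j+1}` in `R(k,m) ⊗ R(k,m)`. -/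
noncomputable def zGen (k m : ℕ) (j : Fin k) :
    FlagRing k m ⊗[ZMod 2] FlagRing k m :=
  xGen k m j ⊗ₜ 1 + 1 ⊗ₜ xGen k m j

/-- `x_{i+1,j+1}` in the `s`-fold tensor power `R(k,m)^{⊗ s}`: the element having
`x_{j+1}` in the `(i+1)`-st tensor factor and `1` elsewhere (`i`, `j` 0-indexed). -/
noncomputable def xT (k m s : ℕ) (i : Fin s) (j : Fin k) :
    ⨂[ZMod 2] _ : Fin s, FlagRing k m :=
  PiTensorProduct.tprod (ZMod 2) (fun t => if t = i then xGen k m j else 1)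

/-- The `s`-th zero-divisor `z_{i+1,j+1} = x_{1,j+1} + x_{i+1,j+1}` in `R(k,m)^{⊗ s}`. -/
noncomputable def zT (k m s : ℕ) (hs : 0 < s) (i : Fin s) (j : Fin k) :
    ⨂[ZMod 2] _ : Fin s, FlagRing k m :=
  xT k m s ⟨0, hs⟩ j + xT k m s i j

section CompleteHomog

variable {R S : Type*} [CommSemiring R] [CommSemiring S]

lemma completeHomog_zero (l : List R) : completeHomog l 0 = 1 := by
  induction l with
  | nil => rfl
  | cons x l ih => simp [completeHomog, ih]

lemma completeHomog_nil_of_pos {d : ℕ} (hd : 0 < d) : completeHomog ([] : List R) d = 0 := by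
  obtain ⟨d, rfl⟩ := Nat.exists_eq_add_of_lt hd
  simp [completeHomog]

lemma completeHomog_cons_succ (x : R) (l : List R) (d : ℕ) :
    completeHomog (x :: l) (d + 1) = completeHomog l (d + 1) + x * completeHomog (x :: l) d := by
  simp only [completeHomog]
  rw [Finset.sum_range_succ', add_comm, Finset.mul_sum]
  simp only [pow_succ', mul_assoc, Nat.add_sub_add_right, pow_zero, one_mul, Nat.sub_zero]

lemma completeHomog_singleton (x : R) (d : ℕ) : completeHomog [x] d = x ^ d := by
  induction d with
  | zero => rw [completeHomog_zero, pow_zero]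
  | succ d ih =>
    rw [completeHomog_cons_succ, completeHomog_nil_of_pos d.succ_pos, zero_add, ih, pow_succ']

lemma completeHomog_append_singleton_succ (l : List R) (x : R) (d : ℕ) :
    completeHomog (l ++ [x]) (d + 1) =
      completeHomog l (d + 1) + x * completeHomog (l ++ [x]) d := by
  induction l generalizing d with
  | nil => exact completeHomog_cons_succ x [] d
  | cons y l ihl =>
    induction d with
    | zero =>
      simp only [List.cons_append, completeHomog_cons_succ, ihl, completeHomog_zero]
      ring
    | succ d ihd =>
      rw [List.cons_append] at ihd ⊢
      calc
        completeHomog (y :: (l ++ [x])) (d + 2)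
        _ = completeHomog l (d + 2) + x * completeHomog (l ++ [x]) (d + 1) +
              y * (completeHomog (y :: l) (d + 1) + x * completeHomog (y :: (l ++ [x])) d) := by
          rw [completeHomog_cons_succ, ihl, ihd]
        _ = (completeHomog l (d + 2) + y * completeHomog (y :: l) (d + 1)) +
              x * (completeHomog (l ++ [x]) (d + 1) + y * completeHomog (y :: (l ++ [x])) d) := by
          ring
        _ = completeHomog (y :: l) (d + 2) + x * completeHomog (y :: (l ++ [x])) (d + 1) := by
          rw [← completeHomog_cons_succ, ← completeHomog_cons_succ]

lemma map_completeHomog (f : R →+* S) (l : List R) (d : ℕ) :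
    f (completeHomog l d) = completeHomog (l.map f) d := by
  induction l generalizing d with
  | nil => cases d <;> simp [completeHomog]
  | cons x l ih => simp [completeHomog, ih]

lemma completeHomog_eq_zero_of_cons {x : R} {l : List R} {d : ℕ}
    (h : ∀ c, d ≤ c + 1 → completeHomog (x :: l) c = 0) : completeHomog l d = 0 := by
  cases d with
  | zero => rw [completeHomog_zero, ← completeHomog_zero (x :: l), h 0 (Nat.zero_le _)]
  | succ d =>
    have hrec := completeHomog_cons_succ x l d
    rwa [h (d + 1) (by lia), h d le_rfl, mul_zero, add_zero, eq_comm] at hrec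

lemma pow_eq_zero_of_completeHomog_append_singleton_eq_zero {l : List R} {x : R} {N : ℕ}
    (h : ∀ d, N ≤ d + l.length → completeHomog (l ++ [x]) d = 0) {d : ℕ} (hd : N ≤ d) :
    x ^ d = 0 := by
  induction l with
  | nil => rw [← completeHomog_singleton]; exact h d hd
  | cons y l ih =>
    refine ih fun c hc ↦ completeHomog_eq_zero_of_cons (x := y) fun b hb ↦ h b ?_
    rw [List.length_cons]
    lia

/-- As `N - n` is truncated, the hypothesis at any `n ≥ N` reads `1 = 0`. -/
lemma completeHomog_take_eq_zero {l : List R} {N : ℕ}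
    (h : ∀ n < l.length, completeHomog (l.take (n + 1)) (N - n) = 0) {n : ℕ} (hn : n ≤ l.length)
    {d : ℕ} (hd : N + 1 ≤ d + n) : completeHomog (l.take n) d = 0 := by
  induction n generalizing d with
  | zero => exact completeHomog_nil_of_pos (by lia)
  | succ n ihn =>
    replace hd : N - n ≤ d := by lia
    induction d, hd using Nat.le_induction with
    | base => exact h n hn
    | succ d hd ihd =>
      have hprev : completeHomog (l.take n) (d + 1) = 0 := ihn (by lia) (by lia)
      rw [List.take_succ_eq_append_getElem hn] at ihd ⊢
      rw [completeHomog_append_singleton_succ, hprev, ihd, mul_zero, add_zero]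

lemma getElem_pow_eq_zero_of_completeHomog_take_eq_zero {l : List R} {N : ℕ}
    (h : ∀ n < l.length, completeHomog (l.take (n + 1)) (N - n) = 0) {n : ℕ} (hn : n < l.length)
    {d : ℕ} (hd : N ≤ d) : l[n] ^ d = 0 := by
  refine pow_eq_zero_of_completeHomog_append_singleton_eq_zero (l := l.take n) (fun c hc ↦ ?_) hd
  rw [← List.take_succ_eq_append_getElem hn]
  rw [List.length_take_of_le hn.le] at hc
  exact completeHomog_take_eq_zero h hn (by lia)

end CompleteHomog

lemma completeHomog_take_xGen_eq_zero (k m : ℕ) {n : ℕ} (hn : n < k) :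
    completeHomog (((List.finRange k).map (xGen k m)).take (n + 1)) (m + k - n) = 0 := by
  have hmem : completeHomog (((List.finRange k).take (n + 1)).map MvPolynomial.X) (m + k - n) ∈
      flagIdeal k m := by
    refine Ideal.subset_span ⟨k - n, by lia, by lia, ?_⟩
    rw [show k + 1 - (k - n) = n + 1 by lia, show m + (k - n) = m + k - n by lia]
  rw [← Ideal.Quotient.eq_zero_iff_mem, map_completeHomog, List.map_map] at hmem
  rwa [← List.map_take]

lemma xGen_pow_eq_zero (k m : ℕ) (j : Fin k) {d : ℕ} (hd : m + k ≤ d) : xGen k m j ^ d = 0 := by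
  have hgen : ∀ n < ((List.finRange k).map (xGen k m)).length,
      completeHomog (((List.finRange k).map (xGen k m)).take (n + 1)) (m + k - n) = 0 :=
    fun n hn ↦ completeHomog_take_xGen_eq_zero k m (by simpa using hn)
  simpa using getElem_pow_eq_zero_of_completeHomog_take_eq_zero hgen (n := j) (by simp) hd

section Frobenius

variable (p : ℕ) [Fact p.Prime]

lemma add_pow_prime_pow_of_algebra_zmod {A : Type*} [CommRing A] [Algebra (ZMod p) A] (a b : A)
    (n : ℕ) : (a + b) ^ p ^ n = a ^ p ^ n + b ^ p ^ n := by
  nontriviality A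
  have : CharP A p := charP_of_injective_algebraMap (algebraMap (ZMod p) A).injective p
  exact add_pow_char_pow a b p n

variable {p}

lemma tmul_one_add_one_tmul_pow_prime_pow_eq_zero {A B : Type*} [CommRing A] [CommRing B]
    [Algebra (ZMod p) A] [Algebra (ZMod p) B] {a : A} {b : B} {n : ℕ} (ha : a ^ p ^ n = 0)
    (hb : b ^ p ^ n = 0) : (a ⊗ₜ[ZMod p] (1 : B) + (1 : A) ⊗ₜ[ZMod p] b) ^ p ^ n = 0 := by
  rw [add_pow_prime_pow_of_algebra_zmod p, Algebra.TensorProduct.tmul_pow,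
    Algebra.TensorProduct.tmul_pow, ha, hb, TensorProduct.zero_tmul, TensorProduct.tmul_zero,
    add_zero]

end Frobenius

/-- if `m + k ≤ 2^{e+1}`, then `z_i^{2^{e+1}} = 0` in `R(k,m) ⊗ R(k,m)`
for every `1 ≤ i ≤ k`. -/
theorem statement11 (k m e : ℕ) (hk : 0 < k) (hm : 0 < m) (h : m + k ≤ 2 ^ (e + 1)) :
    ∀ j : Fin k, zGen k m j ^ (2 ^ (e + 1)) = 0 := by
  intro j
  have hx : xGen k m j ^ 2 ^ (e + 1) = 0 := xGen_pow_eq_zero k m j h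
  exact tmul_one_add_one_tmul_pow_prime_pow_eq_zero hx hx
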